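/- arXiv:2407.15547 — 2 statements merged into one kernel-verified Lean document; each statement's English description precedes it below -/
import Mathlib

section
/- Let τ : [0,∞) → ℂ be Lipschitz continuous. Suppose there is an open set Ω ⊆ ℂ containing the closed half-plane {s : Re s ≥ 0} and an analytic function F on Ω such that F(s) = L{τ;s} for all s ∈ Ω with Re s > 0. Then τ(x) → 0 as x → ∞. -/
open Filter Set MeasureTheory

/-- The Laplace transform of `f : [0,∞) → ℂ` (given as a function on `ℝ`),
`L{f;s} = ∫_0^∞ f(x) e^{-sx} dx`. -/
noncomputable def Laplace (f : ℝ → ℂ) (s : ℂ) : ℂ :=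
  ∫ x in Set.Ioi (0 : ℝ), f x * Complex.exp (-(s * (x : ℂ)))

/-!
Let `φ` be continuous with compact support and `∫ 𝓕 φ = 1`. Multiplying the Laplace transform of
`τ` along `Re s = σ` by `φ`, exchanging the integrals and letting `σ → 0` shows that the integral
of `𝓕 φ (x - y) • τ x` over `x > 0` is the Fourier transform at `-y` of the compactly supported
continuous function `v ↦ φ v • F (2πiv)`. By the Riemann–Lebesgue lemma this smoothing of `τ`
tends to `0` as `y → ∞`.

The Tauberian step is a dilation: uniform continuity gives, for every `η > 0`, some `r > 0` such
that `f x = τ (r x)` oscillates by at most `η (1 + |x - y|)` between `x` and `y`. The smoothing of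
`f` then differs from `f` by at most `η ∫ (1 + |u|) |𝓕 φ u| du`, where the integral does not depend
on `η`.
-/

open Asymptotics FourierTransform SchwartzMap Topology

variable {E : Type*} [NormedAddCommGroup E]

lemma dist_le_mul_one_add_dist_of_forall_dist_lt_one {V X : Type*} [SeminormedAddCommGroup V]
    [NormedSpace ℝ V] [PseudoMetricSpace X] {f : V → X} {η : ℝ}
    (hf : ∀ x y, dist x y < 1 → dist (f x) (f y) ≤ η) (x y : V) :
    dist (f x) (f y) ≤ η * (1 + dist x y) := by
  have hη : 0 ≤ η := by simpa using hf x x (by simp)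
  let n : ℕ := ⌊dist x y⌋₊ + 1
  have hn : (0 : ℝ) < n := by positivity
  let p : ℕ → V := fun i ↦ AffineMap.lineMap x y (i / n : ℝ)
  have hp (i : ℕ) : dist (f (p i)) (f (p (i + 1))) ≤ η := by
    apply hf
    rw [dist_lineMap_lineMap, Real.dist_eq, ← sub_div, abs_div, abs_of_pos hn, div_mul_eq_mul_div,
      div_lt_one hn]
    simpa [n] using Nat.lt_floor_add_one (dist x y)
  calc dist (f x) (f y) = dist (f (p 0)) (f (p n)) := by simp [p, hn.ne']
    _ ≤ ∑ _i ∈ Finset.range n, η := dist_le_range_sum_of_dist_le (f := f ∘ p) n fun _ ↦ hp _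
    _ = η * (1 + ⌊dist x y⌋₊) := by
      rw [Finset.sum_const, Finset.card_range, nsmul_eq_mul]
      push_cast [n]
      ring
    _ ≤ η * (1 + dist x y) := by gcongr; exact Nat.floor_le dist_nonneg

lemma exists_dist_comp_smul_le_of_uniformContinuous {V X : Type*} [SeminormedAddCommGroup V]
    [NormedSpace ℝ V] [PseudoMetricSpace X] {f : V → X} (hf : UniformContinuous f) {η : ℝ}
    (hη : 0 < η) :
    ∃ r : ℝ, 0 < r ∧ ∀ x y, dist (f (r • x)) (f (r • y)) ≤ η * (1 + dist x y) := by
  obtain ⟨r, hr, h⟩ := Metric.uniformContinuous_iff.1 hf η hη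
  refine ⟨r, hr, dist_le_mul_one_add_dist_of_forall_dist_lt_one fun x y hxy ↦ (h ?_).le⟩
  rw [dist_smul₀, Real.norm_of_nonneg hr.le]
  exact mul_lt_of_lt_one_right hr hxy

lemma norm_smul_sub_le_of_dist_le {𝕜 V : Type*} [NormedField 𝕜] [NormedSpace 𝕜 E]
    [SeminormedAddCommGroup V] {f : V → E} {η : ℝ}
    (hf : ∀ x y, dist (f x) (f y) ≤ η * (1 + dist x y)) (g : V → 𝕜) (x y : V) :
    ‖g (x - y) • (f x - f y)‖ ≤ η * ((1 + ‖x - y‖) * ‖g (x - y)‖) := by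
  rw [norm_smul, ← dist_eq_norm, ← dist_eq_norm, mul_comm, ← mul_assoc]
  gcongr
  exact hf x y

lemma integrable_of_integrable_one_add_norm_mul_norm {V : Type*} [SeminormedAddCommGroup V]
    [MeasurableSpace V] {μ : Measure V} {g : V → E} (hgm : AEStronglyMeasurable g μ)
    (hg : Integrable (fun u ↦ (1 + ‖u‖) * ‖g u‖) μ) : Integrable g μ :=
  hg.mono' hgm <| .of_forall fun u ↦
    le_mul_of_one_le_left (norm_nonneg _) (le_add_of_nonneg_right (norm_nonneg u))

section Kernel

variable {𝕜 V : Type*} [RCLike 𝕜] [NormedSpace 𝕜 E] [SeminormedAddCommGroup V] [MeasurableSpace V]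
  [MeasurableAdd V] {μ : Measure V} [μ.IsAddRightInvariant] {g : V → 𝕜} {f : V → E} {η : ℝ}

lemma integrable_comp_sub_smul (hgm : AEStronglyMeasurable g μ)
    (hg : Integrable (fun u ↦ (1 + ‖u‖) * ‖g u‖) μ) (hfm : AEStronglyMeasurable f μ)
    (hf : ∀ x y, dist (f x) (f y) ≤ η * (1 + dist x y)) (y : V) :
    Integrable (fun x ↦ g (x - y) • f x) μ := by
  have hgy : Integrable (fun x ↦ g (x - y)) μ :=
    (integrable_of_integrable_one_add_norm_mul_norm hgm hg).comp_sub_right y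
  have hdiff : Integrable (fun x ↦ g (x - y) • (f x - f y)) μ :=
    ((hg.comp_sub_right y).const_mul η).mono'
      (hgy.aestronglyMeasurable.smul (hfm.sub aestronglyMeasurable_const))
      (.of_forall fun x ↦ norm_smul_sub_le_of_dist_le hf g x y)
  exact (hdiff.add (hgy.smul_const (f y))).congr (.of_forall fun x ↦ by simp [smul_sub])

lemma norm_integral_comp_sub_smul_sub_le [NormedSpace ℝ E] [CompleteSpace E]
    (hgm : AEStronglyMeasurable g μ) (hg : Integrable (fun u ↦ (1 + ‖u‖) * ‖g u‖) μ)
    (hg1 : ∫ u, g u ∂μ = 1) (hfm : AEStronglyMeasurable f μ)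
    (hf : ∀ x y, dist (f x) (f y) ≤ η * (1 + dist x y)) (y : V) :
    ‖(∫ x, g (x - y) • f x ∂μ) - f y‖ ≤ η * ∫ u, (1 + ‖u‖) * ‖g u‖ ∂μ := by
  have hgy : Integrable (fun x ↦ g (x - y)) μ :=
    (integrable_of_integrable_one_add_norm_mul_norm hgm hg).comp_sub_right y
  have hdiff : (∫ x, g (x - y) • f x ∂μ) - f y = ∫ x, g (x - y) • (f x - f y) ∂μ := by
    simp_rw [smul_sub]
    rw [integral_sub (integrable_comp_sub_smul hgm hg hfm hf y) (hgy.smul_const _),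
      integral_smul_const, integral_sub_right_eq_self, hg1, one_smul]
  calc ‖(∫ x, g (x - y) • f x ∂μ) - f y‖ = ‖∫ x, g (x - y) • (f x - f y) ∂μ‖ := by rw [hdiff]
    _ ≤ ∫ x, η * ((1 + ‖x - y‖) * ‖g (x - y)‖) ∂μ :=
      norm_integral_le_of_norm_le ((hg.comp_sub_right y).const_mul η)
        (.of_forall fun x ↦ norm_smul_sub_le_of_dist_le hf g x y)
    _ = η * ∫ u, (1 + ‖u‖) * ‖g u‖ ∂μ := by
      rw [integral_const_mul, integral_sub_right_eq_self fun u ↦ (1 + ‖u‖) * ‖g u‖]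

end Kernel

lemma tendsto_setIntegral_Iic_comp_sub_atTop [NormedSpace ℝ E] (g : ℝ → E) (a : ℝ) :
    Tendsto (fun y ↦ ∫ x in Iic a, g (x - y)) atTop (𝓝 0) := by
  have h : Tendsto (fun y ↦ ∫ u in Iic (a - y), g u) atTop (𝓝 0) :=
    tendsto_integral_Iic_zero (tendsto_const_nhds.add_atBot tendsto_neg_atTop_atBot)
  refine h.congr fun y ↦ ?_
  rw [← (measurePreserving_sub_right volume y).setIntegral_preimage_emb
    (measurableEmbedding_subRight y)]
  simp

lemma isBigO_id_of_dist_le {f : ℝ → E} {η : ℝ}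
    (hf : ∀ x y, dist (f x) (f y) ≤ η * (1 + dist x y)) : f =O[atTop] (id : ℝ → ℝ) := by
  refine .of_bound (‖f 0‖ + 2 * η) ?_
  filter_upwards [eventually_ge_atTop 1] with x hx
  have hη : 0 ≤ η := by simpa using hf 0 0
  have h : ‖f x - f 0‖ ≤ η * (1 + dist x 0) := dist_eq_norm (f x) (f 0) ▸ hf x 0
  rw [dist_zero_right, Real.norm_of_nonneg (by linarith)] at h
  rw [id, Real.norm_of_nonneg (by linarith)]
  nlinarith [norm_le_norm_add_norm_sub' (f x) (f 0), norm_nonneg (f 0)]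

section LaplaceTransform

variable [NormedSpace ℂ E]

/-- The Laplace transform of a vector-valued function; unlike in `Laplace`, the exponential is
the left factor, as it acts on `E` by scalar multiplication. Where the integral does not converge
absolutely the value is `0`. -/
noncomputable def laplaceTransform (f : ℝ → E) (s : ℂ) : E :=
  ∫ x in Ioi (0 : ℝ), Complex.exp (-(s * x)) • f x

/-- Absolute convergence of the Laplace integral of `f` at `s`. -/
def LaplaceConvergent (f : ℝ → E) (s : ℂ) : Prop :=
  IntegrableOn (fun x : ℝ ↦ Complex.exp (-(s * x)) • f x) (Ioi 0)

lemma Laplace_eq_laplaceTransform (f : ℝ → ℂ) : Laplace f = laplaceTransform f := by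
  ext s
  simp only [Laplace, laplaceTransform, smul_eq_mul, mul_comm]

lemma laplaceTransform_congr {f g : ℝ → E} (h : EqOn f g (Ioi 0)) :
    laplaceTransform f = laplaceTransform g := by
  ext s
  exact setIntegral_congr_fun measurableSet_Ioi fun x hx ↦ by simp only [h hx]

lemma laplaceTransform_comp_mul_left (f : ℝ → E) {r : ℝ} (hr : 0 < r) (s : ℂ) :
    laplaceTransform (fun x ↦ f (r * x)) s = r⁻¹ • laplaceTransform f (r⁻¹ * s) := by
  have h := integral_comp_mul_left_Ioi
    (fun x : ℝ ↦ Complex.exp (-(r⁻¹ * s * x)) • f x) 0 hr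
  rw [mul_zero] at h
  rw [laplaceTransform, laplaceTransform, ← h]
  have hr' : (r : ℂ) ≠ 0 := mod_cast hr.ne'
  congr! 5 with x
  push_cast
  field_simp

lemma laplaceConvergent_of_isBigO_pow {f : ℝ → E} (hf : LocallyIntegrableOn f (Ici 0)) {k : ℕ}
    (hO : f =O[atTop] fun x ↦ x ^ k) {s : ℂ} (hs : 0 < s.re) : LaplaceConvergent f s := by
  have hexp : (fun x : ℝ ↦ Complex.exp (-(s * x))) =O[atTop] fun x ↦ Real.exp (-s.re * x) :=
    .of_norm_eventuallyLE <| .of_forall fun x ↦ by simp [Complex.norm_exp]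
  have hpow : (fun x : ℝ ↦ Real.exp (-s.re * x) * x ^ k) =O[atTop]
      fun x ↦ Real.exp (-(s.re / 2) * x) := by
    refine ((isBigO_refl _ _).mul
      (isLittleO_pow_exp_pos_mul_atTop k (half_pos hs)).isBigO).congr_right fun x ↦ ?_
    rw [← Real.exp_add]
    ring_nf
  have hint : IntegrableOn (fun x : ℝ ↦ Real.exp (-(s.re / 2) * x)) (Ioi 0) :=
    integrableOn_exp_mul_Ioi (by linarith) 0
  have hloc : LocallyIntegrableOn (fun x : ℝ ↦ Complex.exp (-(s * x)) • f x) (Ici 0) :=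
    hf.continuousOn_smul isClosed_Ici.isLocallyClosed (by fun_prop)
  exact (hloc.integrableOn_of_isBigO_atTop ((hexp.smul hO).trans hpow)
    ⟨Ioi 0, Ioi_mem_atTop 0, hint⟩).mono_set Ioi_subset_Ici_self

lemma laplaceTransform_eq_fourier (f : ℝ → E) (σ v : ℝ) :
    laplaceTransform f (σ + 2 * Real.pi * v * Complex.I) =
      𝓕 ((Ioi 0).indicator fun x : ℝ ↦ Complex.exp (-(σ * x)) • f x) v := by
  have hexp (x : ℝ) : Complex.exp (-((σ + 2 * Real.pi * v * Complex.I) * x)) =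
      Complex.exp (↑(-2 * Real.pi * x * v) * Complex.I) * Complex.exp (-(σ * x)) := by
    rw [← Complex.exp_add]
    push_cast
    ring_nf
  rw [Real.fourier_real_eq_integral_exp_smul, laplaceTransform,
    ← integral_indicator measurableSet_Ioi]
  simp_rw [hexp, mul_smul, indicator_smul_apply]

lemma tendsto_laplaceTransform_nhdsGT_zero {h : ℝ → E} (hh : IntegrableOn h (Ioi 0)) :
    Tendsto (fun σ : ℝ ↦ laplaceTransform h σ) (𝓝[>] 0) (𝓝 (∫ x in Ioi 0, h x)) := by
  refine tendsto_integral_filter_of_dominated_convergence (fun x ↦ ‖h x‖) ?_ ?_ hh.norm ?_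
  · exact .of_forall fun σ ↦
      (by fun_prop : Continuous _).aestronglyMeasurable.smul hh.aestronglyMeasurable
  · filter_upwards [self_mem_nhdsWithin] with σ (hσ : 0 < σ)
    filter_upwards [ae_restrict_mem measurableSet_Ioi] with x (hx : 0 < x)
    rw [norm_smul]
    refine mul_le_of_le_one_left (norm_nonneg _) ?_
    simpa [Complex.norm_exp] using (mul_pos hσ hx).le
  · refine .of_forall fun x ↦ tendsto_nhdsWithin_of_tendsto_nhds ?_
    have hc : Continuous fun σ : ℝ ↦ Complex.exp (-(σ * x)) • h x := by fun_prop
    simpa using hc.tendsto 0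

end LaplaceTransform

section Fourier

variable {V : Type*} [NormedAddCommGroup V] [InnerProductSpace ℝ V] [FiniteDimensional ℝ V]
  [MeasurableSpace V] [BorelSpace V] [NormedSpace ℂ E]

lemma fourier_fourierChar_inner_smul (f : V → E) (w x : V) :
    𝓕 (fun v ↦ 𝐞 (inner ℝ v w) • f v) x = 𝓕 f (x - w) := by
  simp_rw [Real.fourier_eq, smul_smul, ← AddChar.map_add_eq_mul, inner_sub_right]
  congr! 4
  ring

lemma integral_fourier_eq_apply_zero [CompleteSpace E] {f : V → E} (hf : Continuous f)
    (hfi : Integrable f) (hfi' : Integrable (𝓕 f)) :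
    ∫ u, 𝓕 f u = f 0 := by
  rw [← congrFun (hf.fourierInv_fourier_eq hfi hfi') 0, Real.fourierInv_eq]
  simp

end Fourier

lemma integrable_one_add_norm_mul_norm_schwartzMap {V : Type*} [NormedAddCommGroup V]
    [NormedSpace ℝ V] [MeasurableSpace V] [BorelSpace V] [SecondCountableTopology V]
    [NormedSpace ℝ E] (μ : Measure V) [μ.HasTemperateGrowth] (ψ : 𝓢(V, E)) :
    Integrable (fun u ↦ (1 + ‖u‖) * ‖ψ u‖) μ := by
  simpa [add_mul] using! (ψ.integrable_pow_mul μ 0).add (ψ.integrable_pow_mul μ 1)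

lemma exists_hasCompactSupport_integral_fourier_eq_one :
    ∃ φ : ℝ → ℂ, Continuous φ ∧ HasCompactSupport φ ∧
      (Integrable fun u ↦ (1 + ‖u‖) * ‖𝓕 φ u‖) ∧ ∫ u, 𝓕 φ u = 1 := by
  obtain ⟨b, -, hbc, hb, -, hb0⟩ :=
    exists_contDiff_tsupport_subset (n := ⊤) (x := (0 : ℝ)) univ_mem
  have hc : HasCompactSupport fun x ↦ (b x : ℂ) := hbc.comp_left Complex.ofReal_zero
  let φ : 𝓢(ℝ, ℂ) := hc.toSchwartzMap (Complex.ofRealCLM.contDiff.comp hb)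
  refine ⟨φ, φ.continuous, hc, integrable_one_add_norm_mul_norm_schwartzMap volume (𝓕 φ), ?_⟩
  rw [integral_fourier_eq_apply_zero φ.continuous φ.integrable (𝓕 φ).integrable]
  exact congrArg Complex.ofReal hb0

section Boundary

variable [NormedSpace ℂ E] {f : ℝ → E} {F : ℂ → E} {φ : ℝ → ℂ}

lemma tendsto_integral_smul_comp_ofReal_add (hF : ContinuousOn F {s | 0 ≤ s.re})
    (hφ : Continuous φ) (hφc : HasCompactSupport φ) :
    Tendsto (fun σ : ℝ ↦ ∫ v, φ v • F (σ + 2 * Real.pi * v * Complex.I)) (𝓝[>] 0)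
      (𝓝 (∫ v, φ v • F (2 * Real.pi * v * Complex.I))) := by
  have hcont : ContinuousOn (fun σ : ℝ ↦ ∫ v, φ v • F (σ + 2 * Real.pi * v * Complex.I))
      (Ici 0) := by
    refine continuousOn_integral_of_compact_support hφc.isCompact ?_
      fun σ v _ hv ↦ by rw [image_eq_zero_of_notMem_tsupport hv, zero_smul]
    refine ContinuousOn.smul (by fun_prop) (hF.comp (by fun_prop) fun p hp ↦ ?_)
    simpa using hp.1
  simpa using (hcont 0 self_mem_Ici).mono_left (nhdsWithin_mono 0 Ioi_subset_Ici_self)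

variable [CompleteSpace E]

lemma laplaceTransform_fourier_smul {σ : ℝ} (hf : LaplaceConvergent f σ) (hφ : Integrable φ) :
    laplaceTransform (fun x ↦ 𝓕 φ x • f x) σ =
      ∫ v, φ v • laplaceTransform f (σ + 2 * Real.pi * v * Complex.I) := by
  have h := VectorFourier.integral_fourierIntegral_smul_eq_flip (L := innerₗ ℝ)
    Real.continuous_fourierChar continuous_inner hφ
    ((integrable_indicator_iff measurableSet_Ioi).2 hf)
  rw [flip_innerₗ] at h
  simp_rw [laplaceTransform_eq_fourier]
  refine Eq.trans ?_ h
  simp_rw [← indicator_smul_apply]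
  rw [integral_indicator measurableSet_Ioi, laplaceTransform]
  simp_rw [smul_comm (Complex.exp _)]
  rfl

lemma setIntegral_fourier_smul_eq_integral_smul (hF : ContinuousOn F {s | 0 ≤ s.re})
    (hf : ∀ s : ℂ, 0 < s.re → LaplaceConvergent f s)
    (hFf : ∀ s : ℂ, 0 < s.re → F s = laplaceTransform f s)
    (hφ : Continuous φ) (hφc : HasCompactSupport φ)
    (hφf : IntegrableOn (fun x ↦ 𝓕 φ x • f x) (Ioi 0)) :
    ∫ x in Ioi 0, 𝓕 φ x • f x = ∫ v, φ v • F (2 * Real.pi * v * Complex.I) := by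
  refine tendsto_nhds_unique ((tendsto_laplaceTransform_nhdsGT_zero hφf).congr' ?_)
    (tendsto_integral_smul_comp_ofReal_add hF hφ hφc)
  filter_upwards [self_mem_nhdsWithin] with σ (hσ : 0 < σ)
  rw [laplaceTransform_fourier_smul (hf σ (by simpa)) (hφ.integrable_of_hasCompactSupport hφc)]
  refine integral_congr_ae (.of_forall fun v ↦ ?_)
  simp only [hFf (σ + 2 * Real.pi * v * Complex.I) (by simpa using hσ)]

lemma tendsto_setIntegral_fourier_comp_sub_smul (hF : ContinuousOn F {s | 0 ≤ s.re})
    (hf : ∀ s : ℂ, 0 < s.re → LaplaceConvergent f s)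
    (hFf : ∀ s : ℂ, 0 < s.re → F s = laplaceTransform f s)
    (hφ : Continuous φ) (hφc : HasCompactSupport φ)
    (hφf : ∀ y, IntegrableOn (fun x ↦ 𝓕 φ (x - y) • f x) (Ioi 0)) :
    Tendsto (fun y ↦ ∫ x in Ioi 0, 𝓕 φ (x - y) • f x) atTop (𝓝 0) := by
  have hRL : Tendsto (fun y ↦ 𝓕 (fun v : ℝ ↦ φ v • F (2 * Real.pi * v * Complex.I)) (-y))
      atTop (𝓝 0) :=
    (Real.zero_at_infty_fourier _).comp (tendsto_neg_atTop_atBot.mono_right atBot_le_cocompact)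
  refine hRL.congr fun y ↦ ?_
  simp_rw [← fourier_fourierChar_inner_smul] at hφf ⊢
  rw [setIntegral_fourier_smul_eq_integral_smul (φ := fun v ↦ 𝐞 (inner ℝ v y) • φ v) hF hf hFf
    (by fun_prop) hφc.smul_left (hφf y),
    Real.fourier_eq]
  simp

lemma tendsto_integral_fourier_comp_sub_smul (hF : ContinuousOn F {s | 0 ≤ s.re})
    (hf : ∀ s : ℂ, 0 < s.re → LaplaceConvergent f s)
    (hFf : ∀ s : ℂ, 0 < s.re → F s = laplaceTransform f s)
    (hf0 : ∀ x ≤ 0, f x = f 0) (hφ : Continuous φ) (hφc : HasCompactSupport φ)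
    (hφf : ∀ y, Integrable fun x ↦ 𝓕 φ (x - y) • f x) :
    Tendsto (fun y ↦ ∫ x, 𝓕 φ (x - y) • f x) atTop (𝓝 0) := by
  have hneg : Tendsto (fun y ↦ ∫ x in Iic 0, 𝓕 φ (x - y) • f x) atTop (𝓝 0) := by
    have h := (tendsto_setIntegral_Iic_comp_sub_atTop (𝓕 φ) 0).smul_const (f 0)
    rw [zero_smul] at h
    refine h.congr fun y ↦ ?_
    rw [← integral_smul_const]
    exact setIntegral_congr_fun measurableSet_Iic fun x hx ↦ by simp only [hf0 x hx]
  have h := hneg.add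
    (tendsto_setIntegral_fourier_comp_sub_smul hF hf hFf hφ hφc fun y ↦ (hφf y).integrableOn)
  rw [add_zero] at h
  exact h.congr fun y ↦
    intervalIntegral.integral_Iic_add_Ioi (hφf y).integrableOn (hφf y).integrableOn

lemma eventually_norm_le_of_laplaceTransform (hF : ContinuousOn F {s | 0 ≤ s.re})
    (hFf : ∀ s : ℂ, 0 < s.re → F s = laplaceTransform f s) (hfl : LocallyIntegrable f)
    (hf0 : ∀ x ≤ 0, f x = f 0) {η : ℝ} (hη : 0 < η)
    (hf : ∀ x y, dist (f x) (f y) ≤ η * (1 + dist x y))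
    (hφ : Continuous φ) (hφc : HasCompactSupport φ)
    (hφi : Integrable fun u ↦ (1 + ‖u‖) * ‖𝓕 φ u‖) (hφ1 : ∫ u, 𝓕 φ u = 1) :
    ∀ᶠ y in atTop, ‖f y‖ ≤ η * (1 + ∫ u, (1 + ‖u‖) * ‖𝓕 φ u‖) := by
  have hφm : AEStronglyMeasurable (𝓕 φ) :=
    (VectorFourier.fourierIntegral_continuous Real.continuous_fourierChar continuous_inner
      (hφ.integrable_of_hasCompactSupport hφc)).aestronglyMeasurable
  have hconv (s : ℂ) (hs : 0 < s.re) : LaplaceConvergent f s :=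
    laplaceConvergent_of_isBigO_pow (k := 1) (hfl.locallyIntegrableOn _)
      (by simpa using! isBigO_id_of_dist_le hf) hs
  have hlim := tendsto_integral_fourier_comp_sub_smul hF hconv hFf hf0 hφ hφc
    (integrable_comp_sub_smul hφm hφi hfl.aestronglyMeasurable hf)
  filter_upwards [hlim.norm.eventually_le_const (by simpa using hη)] with y hy
  have hdiff := norm_integral_comp_sub_smul_sub_le hφm hφi hφ1 hfl.aestronglyMeasurable hf y
  linarith [norm_le_norm_add_norm_sub (∫ x, 𝓕 φ (x - y) • f x) (f y)]

lemma tendsto_zero_of_laplaceTransform_of_uniformContinuous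
    (hF : ContinuousOn F {s | 0 ≤ s.re})
    (hFf : ∀ s : ℂ, 0 < s.re → F s = laplaceTransform f s) (hf0 : ∀ x ≤ 0, f x = f 0)
    (hf : UniformContinuous f) : Tendsto f atTop (𝓝 0) := by
  obtain ⟨φ, hφ, hφc, hφi, hφ1⟩ := exists_hasCompactSupport_integral_fourier_eq_one
  let M : ℝ := 1 + ∫ u, (1 + ‖u‖) * ‖𝓕 φ u‖
  have hM : 0 < M := add_pos_of_pos_of_nonneg one_pos (integral_nonneg fun u ↦ by positivity)
  rw [NormedAddGroup.tendsto_nhds_zero]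
  intro ε hε
  obtain ⟨r, hr, hfr⟩ := exists_dist_comp_smul_le_of_uniformContinuous hf
    (show 0 < ε / (2 * M) by positivity)
  have hFr : ContinuousOn (fun s : ℂ ↦ r⁻¹ • F (r⁻¹ * s)) {s | 0 ≤ s.re} := by
    refine (hF.comp (f := fun s : ℂ ↦ r⁻¹ * s) (by fun_prop) fun s hs ↦ ?_).const_smul r⁻¹
    rw [mem_ofPred_eq, Complex.re_ofReal_mul]
    exact mul_nonneg (inv_nonneg.2 hr.le) hs
  have hFfr (s : ℂ) (hs : 0 < s.re) :
      r⁻¹ • F (r⁻¹ * s) = laplaceTransform (fun x ↦ f (r * x)) s := by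
    rw [laplaceTransform_comp_mul_left f hr, hFf]
    rw [Complex.re_ofReal_mul]
    exact mul_pos (inv_pos.2 hr) hs
  have hbound : ∀ᶠ y in atTop, ‖f (r * y)‖ ≤ ε / (2 * M) * M :=
    eventually_norm_le_of_laplaceTransform hFr hFfr
      (hf.continuous.comp (continuous_const_mul r)).locallyIntegrable
      (fun x hx ↦ by rw [hf0 _ (mul_nonpos_of_nonneg_of_nonpos hr.le hx), mul_zero])
      (by positivity) hfr hφ hφc hφi hφ1
  filter_upwards [(tendsto_id.const_mul_atTop (inv_pos.2 hr)).eventually hbound] with x hx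
  rw [id, mul_inv_cancel_left₀ hr.ne'] at hx
  refine hx.trans_lt ?_
  rw [div_mul_eq_mul_div, mul_div_mul_right _ _ hM.ne']
  exact half_lt_self hε

end Boundary

theorem ingham_karamata_general [NormedSpace ℂ E] [CompleteSpace E] (τ : ℝ → E)
    (hτ : UniformContinuousOn τ (Ici 0)) (F : ℂ → E) (hF : ContinuousOn F {s | 0 ≤ s.re})
    (hFeq : ∀ s : ℂ, 0 < s.re → F s = laplaceTransform τ s) : Tendsto τ atTop (𝓝 0) := by
  let f : ℝ → E := fun x ↦ τ (max x 0)
  have hfτ {x : ℝ} (hx : 0 < x) : f x = τ x := congrArg τ (max_eq_left hx.le)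
  have hf : UniformContinuous f := uniformContinuousOn_univ.1 <|
    hτ.comp (LipschitzWith.id.max_const 0).uniformContinuous.uniformContinuousOn
      fun x _ ↦ le_max_right x 0
  have hf0 (x : ℝ) (hx : x ≤ 0) : f x = f 0 := by simp [f, hx]
  rw [← laplaceTransform_congr fun x hx ↦ hfτ hx] at hFeq
  exact (tendsto_zero_of_laplaceTransform_of_uniformContinuous hF hFeq hf0 hf).congr'
    ((eventually_gt_atTop 0).mono fun _ ↦ hfτ)

/-- The Ingham–Karamata theorem: if `τ` is Lipschitz on `[0,∞)` and its Laplace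
transform extends analytically to an open set containing the closed half-plane
`{Re s ≥ 0}`, then `τ(x) → 0` as `x → ∞`. -/
theorem ingham_karamata
    (τ : ℝ → ℂ) (K : NNReal) (hlip : LipschitzOnWith K τ (Set.Ici 0))
    (Ω : Set ℂ) (hΩopen : IsOpen Ω) (hΩ : {s : ℂ | 0 ≤ s.re} ⊆ Ω)
    (F : ℂ → ℂ) (hF : DifferentiableOn ℂ F Ω)
    (hFeq : ∀ s ∈ Ω, 0 < s.re → F s = Laplace τ s) :
    Tendsto τ atTop (nhds 0) :=
  ingham_karamata_general τ hlip.uniformContinuousOn F (hF.continuousOn.mono hΩ)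
    fun s hs ↦ Laplace_eq_laplaceTransform τ ▸ hFeq s (hΩ hs.le) hs
end

section
/- Let ρ : [0,∞) → (0,∞) be any function with ρ(x) → 0 as x → ∞. Then there exists τ ∈ C¹[0,∞) with τ'(x) → 0 as x → ∞, and an entire function F with F(s) = L{τ;s} for all s with Re s > 0, such that limsup_{x→∞} |τ(x)|/ρ(x) = ∞. -/
open Filter Set MeasureTheory

/-!
A Gaussian wave packet of centre `X`, width of order `√(X / b)` and frequency `4 b` has height `1`
and derivative `O(b)`, uniformly in `X`. Completing the square shows that its Laplace transform is
bounded on the disc `‖s‖ ≤ b`, again uniformly in `X`: there the oscillation outweighs the factor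
`e ^ (-s x)`, which can be as large as `e ^ (b X)` at the centre. Hence in a series of packets with
summable amplitudes and slowly growing frequencies the centres are free: the Laplace transforms
always add up to an entire function, and the centres can be placed so far out that `ρ` is much
smaller there than the amplitudes.
-/

open scoped Topology

section Series

lemma differentiable_tsum_of_eventually_norm_le {ι E : Type*} [NormedAddCommGroup E]
    [NormedSpace ℂ E] [CompleteSpace E] {F : ι → ℂ → E} {u : ι → ℝ} (hu : Summable u)
    (hF : ∀ n, Differentiable ℂ (F n))
    (hFu : ∀ R : ℝ, ∀ᶠ n in cofinite, ∀ s : ℂ, ‖s‖ ≤ R → ‖F n s‖ ≤ u n) :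
    Differentiable ℂ fun s ↦ ∑' n, F n s := by
  intro s
  have hlim : TendstoUniformlyOn (fun t z ↦ ∑ n ∈ t, F n z) (fun z ↦ ∑' n, F n z) atTop
      (Metric.ball 0 (‖s‖ + 1)) := by
    refine tendstoUniformlyOn_tsum_of_cofinite_eventually hu ?_
    filter_upwards [hFu (‖s‖ + 1)] with n hn z hz using hn z (mem_ball_zero_iff.1 hz).le
  have hdiff : ∀ t : Finset ι,
      DifferentiableOn ℂ (fun z ↦ ∑ n ∈ t, F n z) (Metric.ball 0 (‖s‖ + 1)) :=
    fun t ↦ (Differentiable.fun_sum fun n _ ↦ hF n).differentiableOn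
  exact (hlim.tendstoLocallyUniformlyOn.differentiableOn (Eventually.of_forall hdiff)
    Metric.isOpen_ball).differentiableAt
    (Metric.isOpen_ball.mem_nhds (mem_ball_zero_iff.2 (lt_add_one _)))

lemma geometric_gap_le_norm_tsum {E : Type*} [NormedAddCommGroup E] [CompleteSpace E]
    {f : ℕ → E} {r : ℝ} {n : ℕ} (hr0 : 0 ≤ r) (hr1 : r < 1) (hf : ∀ m, ‖f m‖ ≤ r ^ m)
    (hn : r ^ n ≤ ‖f n‖) (hlt : ∀ m < n, ‖f m‖ ≤ r ^ m * r ^ (n + 1)) :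
    r ^ n - 2 * (r ^ (n + 1) / (1 - r)) ≤ ‖∑' m, f m‖ := by
  have hgeom := hasSum_geometric_of_lt_one hr0 hr1
  have hhead : ‖∑ m ∈ Finset.range n, f m‖ ≤ r ^ (n + 1) / (1 - r) := calc
    ‖∑ m ∈ Finset.range n, f m‖ ≤ ∑ m ∈ Finset.range n, r ^ m * r ^ (n + 1) :=
      norm_sum_le_of_le _ fun m hm ↦ hlt m (Finset.mem_range.1 hm)
    _ = (∑ m ∈ Finset.range n, r ^ m) * r ^ (n + 1) := (Finset.sum_mul ..).symm
    _ ≤ (1 - r)⁻¹ * r ^ (n + 1) := by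
      gcongr
      exact sum_le_hasSum _ (fun m _ ↦ pow_nonneg hr0 m) hgeom
    _ = r ^ (n + 1) / (1 - r) := inv_mul_eq_div _ _
  have htail : ‖∑' m, f (m + (n + 1))‖ ≤ r ^ (n + 1) / (1 - r) := by
    refine tsum_of_norm_bounded ?_ fun m ↦ hf (m + (n + 1))
    simpa only [pow_add _ _ (n + 1), inv_mul_eq_div] using hgeom.mul_right (r ^ (n + 1))
  have hsum : Summable f :=
    .of_norm_bounded (summable_geometric_of_lt_one hr0 hr1) hf
  have hsplit : f n =
      ∑' m, f m - ∑ m ∈ Finset.range n, f m - ∑' m, f (m + (n + 1)) := by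
    rw [← hsum.sum_add_tsum_nat_add (n + 1), Finset.sum_range_succ]
    abel
  have hnorm := congrArg norm hsplit
  linarith [norm_sub_le (∑' m, f m - ∑ m ∈ Finset.range n, f m) (∑' m, f (m + (n + 1))),
    norm_sub_le (∑' m, f m) (∑ m ∈ Finset.range n, f m)]

lemma summable_abs_pow_mul_add_one {r : ℝ} (hr : |r| < 1) :
    Summable fun n : ℕ ↦ |r ^ n| * ((n : ℝ) + 1) := by
  have hr' : ‖|r|‖ < 1 := by rwa [Real.norm_eq_abs, abs_abs]
  refine ((summable_pow_mul_geometric_of_norm_lt_one 1 hr').add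
    (summable_geometric_of_norm_lt_one hr')).congr fun n ↦ ?_
  rw [abs_pow]
  ring

end Series

section Laplace

lemma norm_cexp_neg_mul_ofReal (s : ℂ) (x : ℝ) :
    ‖Complex.exp (-(s * (x : ℂ)))‖ = Real.exp (-(s.re * x)) := by
  simp [Complex.norm_exp]

lemma norm_mul_cexp_mul_ofReal_le {σ : ℝ} {z : ℂ} (hz : σ < z.re) (w : ℂ) {x : ℝ} (hx : 0 ≤ x) :
    ‖w * (Complex.exp (-(z * (x : ℂ))) * (x : ℂ))‖ ≤
      (z.re - σ)⁻¹ * ‖w * Complex.exp (-((σ : ℂ) * (x : ℂ)))‖ := by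
  have hlin : (z.re - σ) * x ≤ Real.exp ((z.re - σ) * x) := by
    linarith [Real.add_one_le_exp ((z.re - σ) * x)]
  have hexp : Real.exp (-(z.re * x)) * x ≤ (z.re - σ)⁻¹ * Real.exp (-(σ * x)) := by
    rw [← div_eq_inv_mul, le_div_iff₀ (sub_pos.2 hz)]
    calc Real.exp (-(z.re * x)) * x * (z.re - σ)
        = Real.exp (-(z.re * x)) * ((z.re - σ) * x) := by ring
      _ ≤ Real.exp (-(z.re * x)) * Real.exp ((z.re - σ) * x) := by gcongr
      _ = Real.exp (-(σ * x)) := by rw [← Real.exp_add]; ring_nf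
  simp only [norm_mul, norm_cexp_neg_mul_ofReal, Complex.ofReal_re, Complex.norm_real,
    Real.norm_of_nonneg hx]
  calc ‖w‖ * (Real.exp (-(z.re * x)) * x)
      ≤ ‖w‖ * ((z.re - σ)⁻¹ * Real.exp (-(σ * x))) := by gcongr
    _ = (z.re - σ)⁻¹ * (‖w‖ * Real.exp (-(σ * x))) := by ring

lemma aestronglyMeasurable_of_mul_cexp {f : ℝ → ℂ} {s : ℂ} {μ : Measure ℝ}
    (hf : AEStronglyMeasurable (fun x : ℝ ↦ f x * Complex.exp (-(s * (x : ℂ)))) μ) :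
    AEStronglyMeasurable f μ := by
  have hcont : Continuous fun x : ℝ ↦ Complex.exp (s * (x : ℂ)) := by fun_prop
  refine (hf.mul hcont.aestronglyMeasurable).congr (Eventually.of_forall fun x ↦ ?_)
  simp [mul_assoc, ← Complex.exp_add]

lemma integrableOn_mul_cexp_of_re_le {f : ℝ → ℂ} {s z : ℂ} (hsz : s.re ≤ z.re)
    (hf : IntegrableOn (fun x : ℝ ↦ f x * Complex.exp (-(s * (x : ℂ)))) (Ioi 0)) :
    IntegrableOn (fun x : ℝ ↦ f x * Complex.exp (-(z * (x : ℂ)))) (Ioi 0) := by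
  have hcont : Continuous fun x : ℝ ↦ Complex.exp (-(z * (x : ℂ))) := by fun_prop
  refine Integrable.mono hf ((aestronglyMeasurable_of_mul_cexp hf.aestronglyMeasurable).mul
    hcont.aestronglyMeasurable) ?_
  filter_upwards [ae_restrict_mem measurableSet_Ioi] with x hx
  rw [norm_mul, norm_mul, norm_cexp_neg_mul_ofReal, norm_cexp_neg_mul_ofReal]
  gcongr
  exact (mem_Ioi.1 hx).le

lemma differentiableAt_laplace {f : ℝ → ℂ} {σ : ℝ} {s : ℂ} (hs : σ < s.re)
    (hf : IntegrableOn (fun x : ℝ ↦ f x * Complex.exp (-((σ : ℂ) * (x : ℂ)))) (Ioi 0)) :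
    DifferentiableAt ℂ (Laplace f) s := by
  set δ := (s.re - σ) / 2 with hδ
  have hδ0 : 0 < δ := half_pos (sub_pos.2 hs)
  have hre : ∀ z ∈ Metric.ball s δ, δ < z.re - σ := fun z hz ↦ by
    have hdist := (Complex.abs_re_le_norm (z - s)).trans_lt (mem_ball_iff_norm.1 hz)
    rw [Complex.sub_re] at hdist
    linarith [neg_lt_of_abs_lt hdist]
  have hmeas := aestronglyMeasurable_of_mul_cexp hf.aestronglyMeasurable
  refine (hasDerivAt_integral_of_dominated_loc_of_deriv_le
    (F := fun z x ↦ f x * Complex.exp (-(z * (x : ℂ))))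
    (F' := fun z x ↦ f x * (Complex.exp (-(z * (x : ℂ))) * -(x : ℂ)))
    (bound := fun x ↦ δ⁻¹ * ‖f x * Complex.exp (-((σ : ℂ) * (x : ℂ)))‖)
    (Metric.ball_mem_nhds s hδ0)
    (Eventually.of_forall fun z ↦ hmeas.mul (Continuous.aestronglyMeasurable (by fun_prop)))
    (integrableOn_mul_cexp_of_re_le hs.le hf)
    (hmeas.mul (Continuous.aestronglyMeasurable (by fun_prop))) ?_ (hf.norm.const_mul _)
    (Eventually.of_forall fun x z _ ↦ ?_)).2.differentiableAt
  · filter_upwards [ae_restrict_mem measurableSet_Ioi] with x hx z hz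
    rw [mul_neg, mul_neg, norm_neg]
    refine (norm_mul_cexp_mul_ofReal_le (sub_pos.1 (hδ0.trans (hre z hz))) (f x)
      (mem_Ioi.1 hx).le).trans ?_
    gcongr
    exact (hre z hz).le
  · exact (((hasDerivAt_id z).mul_const (x : ℂ)).fun_neg.cexp.const_mul (f x)).congr_deriv
      (by simp)

lemma hasSum_laplace {ι : Type*} [Countable ι] {f : ι → ℝ → ℂ} {u : ι → ℝ} {s : ℂ}
    (hs : 0 < s.re) (hu : Summable u)
    (hf : ∀ n, AEStronglyMeasurable (f n) (volume.restrict (Ioi 0)))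
    (hfu : ∀ n, ∀ x ∈ Ioi (0 : ℝ), ‖f n x‖ ≤ u n) :
    HasSum (fun n ↦ Laplace (f n) s) (Laplace (fun x ↦ ∑' n, f n x) s) := by
  refine hasSum_integral_of_dominated_convergence
    (fun n x ↦ u n * Real.exp (-(s.re * x)))
    (fun n ↦ (hf n).mul (Continuous.aestronglyMeasurable (by fun_prop)))
    (fun n ↦ ?_) (Eventually.of_forall fun x ↦ hu.mul_right _) ?_ ?_
  · filter_upwards [ae_restrict_mem measurableSet_Ioi] with x hx
    rw [norm_mul, norm_cexp_neg_mul_ofReal]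
    exact mul_le_mul_of_nonneg_right (hfu n x hx) (Real.exp_nonneg _)
  · simp only [tsum_mul_right, ← neg_mul]
    exact (integrableOn_exp_mul_Ioi (neg_lt_zero.2 hs) 0).const_mul _
  · filter_upwards [ae_restrict_mem measurableSet_Ioi] with x hx
    exact (Summable.of_norm_bounded hu fun n ↦ hfu n x hx).hasSum.mul_right _

lemma laplace_const_smul (a : ℝ) (f : ℝ → ℂ) (s : ℂ) :
    Laplace (a • f) s = a • Laplace f s := by
  simp only [Laplace, Pi.smul_apply, smul_mul_assoc, integral_smul]

end Laplace

section GaussianPacket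

variable {c ξ : ℝ}

/-- The Gaussian `e ^ (-c y²)` modulated to frequency `ξ`. -/
noncomputable def gaussianPacket (c ξ y : ℝ) : ℂ :=
  Complex.exp (-(c : ℂ) * (y : ℂ) ^ 2 + (ξ : ℂ) * Complex.I * (y : ℂ))

lemma norm_gaussianPacket (c ξ y : ℝ) : ‖gaussianPacket c ξ y‖ = Real.exp (-c * y ^ 2) := by
  simp [gaussianPacket, Complex.norm_exp, ← Complex.ofReal_pow]

lemma hasDerivAt_gaussianPacket (c ξ y : ℝ) :
    HasDerivAt (gaussianPacket c ξ)
      (gaussianPacket c ξ y * (-(2 * c * y : ℝ) + ξ * Complex.I)) y := by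
  have hid : HasDerivAt (fun y : ℝ ↦ (y : ℂ)) 1 y := Complex.ofRealCLM.hasDerivAt
  convert! (((hid.fun_pow 2).const_mul (-(c : ℂ))).fun_add
    (hid.const_mul ((ξ : ℂ) * Complex.I))).cexp using 1
  rw [gaussianPacket]
  push_cast
  ring

lemma continuous_gaussianPacket (c ξ : ℝ) : Continuous (gaussianPacket c ξ) := by
  unfold gaussianPacket
  fun_prop

lemma deriv_gaussianPacket (c ξ : ℝ) :
    deriv (gaussianPacket c ξ) =
      fun y ↦ gaussianPacket c ξ y * (-(2 * c * y : ℝ) + ξ * Complex.I) :=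
  funext fun y ↦ (hasDerivAt_gaussianPacket c ξ y).deriv

lemma continuous_deriv_gaussianPacket (c ξ : ℝ) : Continuous (deriv (gaussianPacket c ξ)) := by
  have := continuous_gaussianPacket c ξ
  rw [deriv_gaussianPacket]
  fun_prop

lemma norm_deriv_gaussianPacket_le (hc : 0 ≤ c) (ξ y : ℝ) :
    ‖deriv (gaussianPacket c ξ) y‖ ≤
      2 * c * (|y| * Real.exp (-c * y ^ 2)) + |ξ| * Real.exp (-c * y ^ 2) := by
  have hfactor : ‖(-(2 * c * y : ℝ) + ξ * Complex.I : ℂ)‖ ≤ 2 * c * |y| + |ξ| := by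
    refine (norm_add_le _ _).trans_eq ?_
    rw [norm_neg, norm_mul, Complex.norm_I, Complex.norm_real, Complex.norm_real,
      Real.norm_eq_abs, Real.norm_eq_abs, abs_mul, abs_of_nonneg (by positivity : 0 ≤ 2 * c),
      mul_one]
  rw [deriv_gaussianPacket, norm_mul, norm_gaussianPacket]
  calc Real.exp (-c * y ^ 2) * ‖(-(2 * c * y : ℝ) + ξ * Complex.I : ℂ)‖
      ≤ Real.exp (-c * y ^ 2) * (2 * c * |y| + |ξ|) := by gcongr
    _ = _ := by ring

lemma norm_deriv_gaussianPacket_le_sqrt_add (hc : 0 ≤ c) (ξ y : ℝ) :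
    ‖deriv (gaussianPacket c ξ) y‖ ≤ √c + |ξ| := by
  have hy : c * y ^ 2 = (√c * |y|) ^ 2 := by rw [mul_pow, Real.sq_sqrt hc, sq_abs]
  have hle : 2 * (√c * |y|) * Real.exp (-c * y ^ 2) ≤ 1 := by
    rw [neg_mul, Real.exp_neg, ← div_eq_mul_inv, div_le_one (Real.exp_pos _)]
    linarith [Real.add_one_le_exp (c * y ^ 2), two_mul_le_add_sq (√c * |y|) 1]
  have hexp : Real.exp (-c * y ^ 2) ≤ 1 :=
    Real.exp_le_one_iff.2 (mul_nonpos_of_nonpos_of_nonneg (neg_nonpos.2 hc) (sq_nonneg y))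
  calc ‖deriv (gaussianPacket c ξ) y‖
      ≤ 2 * c * (|y| * Real.exp (-c * y ^ 2)) + |ξ| * Real.exp (-c * y ^ 2) :=
        norm_deriv_gaussianPacket_le hc ξ y
    _ = √c * (2 * (√c * |y|) * Real.exp (-c * y ^ 2)) + |ξ| * Real.exp (-c * y ^ 2) := by
        linear_combination -2 * |y| * Real.exp (-c * y ^ 2) * Real.mul_self_sqrt hc
    _ ≤ √c * 1 + |ξ| * 1 := by gcongr
    _ = √c + |ξ| := by rw [mul_one, mul_one]

lemma tendsto_deriv_gaussianPacket (hc : 0 < c) (ξ : ℝ) :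
    Tendsto (deriv (gaussianPacket c ξ)) atTop (𝓝 0) := by
  have hpow (p : ℝ) := (tendsto_rpow_abs_mul_exp_neg_mul_sq_cocompact hc p).mono_left
    atTop_le_cocompact
  have hbound := ((hpow 1).const_mul (2 * c)).add ((hpow 0).const_mul |ξ|)
  simp only [Real.rpow_one, Real.rpow_zero, one_mul, mul_zero, add_zero] at hbound
  exact squeeze_zero_norm (norm_deriv_gaussianPacket_le hc.le ξ) hbound

lemma gaussianPacket_mul_cexp (c ξ : ℝ) (s : ℂ) (y : ℝ) :
    gaussianPacket c ξ y * Complex.exp (-(s * (y : ℂ))) =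
      Complex.exp (-(c : ℂ) * (y : ℂ) ^ 2 + (ξ * Complex.I - s) * (y : ℂ) + 0) := by
  rw [gaussianPacket, ← Complex.exp_add]
  ring_nf

lemma gaussianPacket_sub_mul_cexp (c ξ μ : ℝ) (s : ℂ) (x : ℝ) :
    gaussianPacket c ξ (x - μ) * Complex.exp (-(s * (x : ℂ))) =
      Complex.exp (-(s * (μ : ℂ))) *
        (gaussianPacket c ξ (x - μ) * Complex.exp (-(s * ((x - μ : ℝ) : ℂ)))) := by
  rw [mul_left_comm, ← Complex.exp_add]
  push_cast
  ring_nf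

lemma integrable_gaussianPacket_sub_mul_cexp (hc : 0 < c) (ξ μ : ℝ) (s : ℂ) :
    Integrable fun x : ℝ ↦ gaussianPacket c ξ (x - μ) * Complex.exp (-(s * (x : ℂ))) := by
  have hcentred :
      Integrable fun y : ℝ ↦ gaussianPacket c ξ y * Complex.exp (-(s * (y : ℂ))) := by
    simp only [gaussianPacket_mul_cexp]
    exact integrable_cexp_quadratic (by simpa using hc) _ _
  simp only [gaussianPacket_sub_mul_cexp c ξ μ s]
  exact (hcentred.comp_sub_right μ).const_mul _

lemma norm_integral_gaussianPacket_mul_cexp (hc : 0 < c) (ξ : ℝ) (s : ℂ) :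
    ‖∫ y : ℝ, gaussianPacket c ξ y * Complex.exp (-(s * (y : ℂ)))‖ =
      √(Real.pi / c) * Real.exp ((s.re ^ 2 - (ξ - s.im) ^ 2) / (4 * c)) := by
  have hbase : ((Real.pi : ℂ) / -(-(c : ℂ))) = ((Real.pi / c : ℝ) : ℂ) := by push_cast; ring
  have hexponent : (0 - (ξ * Complex.I - s) ^ 2 / (4 * -(c : ℂ))) =
      ((4 * c)⁻¹ : ℝ) * (ξ * Complex.I - s) ^ 2 := by push_cast; field_simp; ring
  simp only [gaussianPacket_mul_cexp]
  rw [integral_cexp_quadratic (by simpa using hc), norm_mul, hbase, hexponent,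
    Complex.norm_cpow_eq_rpow_re_of_pos (by positivity), Complex.norm_exp, Real.sqrt_eq_rpow]
  congr 2
  · norm_num
  · rw [Complex.re_ofReal_mul, sq, Complex.mul_re]
    simp
    ring

lemma norm_integral_gaussianPacket_sub_mul_cexp (hc : 0 < c) (ξ μ : ℝ) (s : ℂ) :
    ‖∫ x : ℝ, gaussianPacket c ξ (x - μ) * Complex.exp (-(s * (x : ℂ)))‖ =
      √(Real.pi / c) * Real.exp ((s.re ^ 2 - (ξ - s.im) ^ 2) / (4 * c) - s.re * μ) := by
  simp only [gaussianPacket_sub_mul_cexp c ξ μ s]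
  rw [integral_const_mul, integral_sub_right_eq_self
      (fun y : ℝ ↦ gaussianPacket c ξ y * Complex.exp (-(s * (y : ℂ)))), norm_mul,
    norm_cexp_neg_mul_ofReal, norm_integral_gaussianPacket_mul_cexp hc, mul_left_comm,
    ← Real.exp_add, neg_add_eq_sub]

lemma norm_integral_Iic_gaussianPacket_sub_mul_cexp_le {μ : ℝ} {s : ℂ} (hc : 0 ≤ c) (ξ : ℝ)
    (hs : s.re < 2 * c * μ) :
    ‖∫ x in Iic (0 : ℝ), gaussianPacket c ξ (x - μ) * Complex.exp (-(s * (x : ℂ)))‖ ≤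
      (2 * c * μ - s.re)⁻¹ := by
  have hpos : 0 < 2 * c * μ - s.re := sub_pos.2 hs
  calc ‖∫ x in Iic (0 : ℝ), gaussianPacket c ξ (x - μ) * Complex.exp (-(s * (x : ℂ)))‖
      ≤ ∫ x in Iic (0 : ℝ), Real.exp ((2 * c * μ - s.re) * x) := by
        refine norm_integral_le_of_norm_le (integrableOn_exp_mul_Iic hpos 0)
          (Eventually.of_forall fun x ↦ ?_)
        rw [norm_mul, norm_gaussianPacket, norm_cexp_neg_mul_ofReal, ← Real.exp_add,
          Real.exp_le_exp]
        linarith [mul_nonneg hc (sq_nonneg x), mul_nonneg hc (sq_nonneg μ)]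
    _ = (2 * c * μ - s.re)⁻¹ := by simp [integral_exp_mul_Iic hpos]

lemma norm_laplace_gaussianPacket_sub_le {μ : ℝ} {s : ℂ} (hc : 0 < c) (ξ : ℝ)
    (hs : s.re < 2 * c * μ) :
    ‖Laplace (fun x ↦ gaussianPacket c ξ (x - μ)) s‖ ≤
      √(Real.pi / c) * Real.exp ((s.re ^ 2 - (ξ - s.im) ^ 2) / (4 * c) - s.re * μ) +
        (2 * c * μ - s.re)⁻¹ := by
  have hsplit := integral_add_compl (measurableSet_Ioi (a := (0 : ℝ)))
    (integrable_gaussianPacket_sub_mul_cexp hc ξ μ s)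
  rw [compl_Ioi] at hsplit
  rw [Laplace, eq_sub_of_add_eq hsplit, ← norm_integral_gaussianPacket_sub_mul_cexp hc]
  exact (norm_sub_le _ _).trans
    (by gcongr; exact norm_integral_Iic_gaussianPacket_sub_mul_cexp_le hc.le ξ hs)

end GaussianPacket

section WavePacket

variable {b X : ℝ}

/-- The wave packet centred at `X` of the construction. Its Gaussian parameter `b / X` makes the
exponents at `0` and at `X` scale like `b * X`, and the frequency `4 * b` is large enough to
dominate `e ^ (-s x)` for `‖s‖ ≤ b`. -/
noncomputable def wavePacket (b X x : ℝ) : ℂ :=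
  gaussianPacket (b / X) (4 * b) (x - X)

lemma norm_wavePacket (b X x : ℝ) :
    ‖wavePacket b X x‖ = Real.exp (-(b / X) * (x - X) ^ 2) :=
  norm_gaussianPacket _ _ _

lemma norm_wavePacket_le_one (hb : 0 ≤ b) (hX : 0 ≤ X) (x : ℝ) : ‖wavePacket b X x‖ ≤ 1 := by
  rw [norm_wavePacket, Real.exp_le_one_iff, neg_mul, neg_nonpos]
  positivity

lemma norm_wavePacket_le_exp {y : ℝ} (hb : 1 ≤ b) (hX : 0 < X) (hy : 2 * X ≤ y) :
    ‖wavePacket b X y‖ ≤ Real.exp (-(y / 2)) := by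
  have hquad : y / 2 * X ≤ (y - X) ^ 2 := by nlinarith
  rw [norm_wavePacket, Real.exp_le_exp, neg_mul, neg_le_neg_iff]
  calc y / 2 ≤ (y - X) ^ 2 / X := (le_div_iff₀ hX).2 hquad
    _ ≤ b * ((y - X) ^ 2 / X) := le_mul_of_one_le_left (by positivity) hb
    _ = b / X * (y - X) ^ 2 := by ring

lemma continuous_wavePacket (b X : ℝ) : Continuous (wavePacket b X) :=
  (continuous_gaussianPacket _ _).comp (continuous_sub_right X)

lemma deriv_wavePacket (b X : ℝ) :
    deriv (wavePacket b X) = fun x ↦ deriv (gaussianPacket (b / X) (4 * b)) (x - X) :=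
  funext fun _ ↦ deriv_comp_sub_const ..

lemma differentiable_wavePacket (b X : ℝ) : Differentiable ℝ (wavePacket b X) := fun x ↦
  ((hasDerivAt_gaussianPacket _ _ (x - X)).comp_sub_const x X).differentiableAt

lemma continuous_deriv_wavePacket (b X : ℝ) : Continuous (deriv (wavePacket b X)) := by
  rw [deriv_wavePacket]
  exact (continuous_deriv_gaussianPacket _ _).comp (continuous_sub_right X)

lemma norm_deriv_wavePacket_le (hb : 1 ≤ b) (hX : 1 ≤ X) (x : ℝ) :
    ‖deriv (wavePacket b X) x‖ ≤ 5 * b := by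
  have hb0 : 0 < b := by positivity
  have hwidth : √(b / X) ≤ b := by
    rw [Real.sqrt_le_left hb0.le]
    exact (div_le_self hb0.le hX).trans (le_self_pow₀ hb two_ne_zero)
  rw [deriv_wavePacket]
  refine (norm_deriv_gaussianPacket_le_sqrt_add (by positivity) _ _).trans ?_
  rw [abs_of_pos (by positivity)]
  linarith

lemma tendsto_deriv_wavePacket (hb : 0 < b) (hX : 0 < X) :
    Tendsto (deriv (wavePacket b X)) atTop (𝓝 0) := by
  rw [deriv_wavePacket]
  exact (tendsto_deriv_gaussianPacket (by positivity) _).comp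
    (tendsto_atTop_add_const_right atTop (-X) tendsto_id)

lemma differentiable_laplace_wavePacket (hb : 0 < b) (hX : 0 < X) :
    Differentiable ℂ (Laplace (wavePacket b X)) := fun s ↦
  differentiableAt_laplace (sub_one_lt s.re)
    (integrable_gaussianPacket_sub_mul_cexp (div_pos hb hX) (4 * b) X _).integrableOn

lemma wavePacket_laplace_exponent_le {s : ℂ} (hb : 0 < b) (hX : 0 < X) (hs : ‖s‖ ≤ b) :
    (s.re ^ 2 - (4 * b - s.im) ^ 2) / (4 * (b / X)) - s.re * X ≤ -(b * X) := by
  obtain ⟨hre, hre'⟩ := abs_le.1 ((Complex.abs_re_le_norm s).trans hs)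
  obtain ⟨-, him⟩ := abs_le.1 ((Complex.abs_im_le_norm s).trans hs)
  have hre_sq : s.re ^ 2 ≤ b ^ 2 := sq_le_sq' hre hre'
  have him_sq : (3 * b) ^ 2 ≤ (4 * b - s.im) ^ 2 := by gcongr; linarith
  have hquot : (s.re ^ 2 - (4 * b - s.im) ^ 2) / (4 * (b / X)) ≤ -(2 * (b * X)) := by
    rw [div_le_iff₀ (by positivity)]
    have hcancel : -(2 * (b * X)) * (4 * (b / X)) = -(8 * b ^ 2) := by field_simp; ring
    linarith
  linarith [mul_le_mul_of_nonneg_right hre hX.le]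

lemma norm_laplace_wavePacket_le {s : ℂ} (hb : 1 ≤ b) (hX : 1 ≤ X) (hs : ‖s‖ ≤ b) :
    ‖Laplace (wavePacket b X) s‖ ≤ 3 := by
  have hb0 : 0 < b := by positivity
  have hX0 : 0 < X := by positivity
  have hre : s.re ≤ b := (Complex.re_le_norm s).trans hs
  have hcX : 2 * (b / X) * X = 2 * b := by field_simp
  have hsqrt : √(Real.pi / (b / X)) ≤ 2 * X := by
    rw [Real.sqrt_le_left (by positivity), div_div_eq_mul_div, div_le_iff₀ hb0]
    calc Real.pi * X ≤ 4 * X := by gcongr; exact Real.pi_le_four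
      _ ≤ (2 * X) ^ 2 * b := by nlinarith [mul_le_mul hX hb zero_le_one hX0.le]
  have hexp : Real.exp ((s.re ^ 2 - (4 * b - s.im) ^ 2) / (4 * (b / X)) - s.re * X) ≤
      Real.exp (-X) :=
    Real.exp_le_exp.2 ((wavePacket_laplace_exponent_le hb0 hX0 hs).trans
      (neg_le_neg (le_mul_of_one_le_left hX0.le hb)))
  have hXexp : X * Real.exp (-X) ≤ 1 :=
    (Real.mul_exp_neg_le_exp_neg_one X).trans (Real.exp_le_one_iff.2 (by norm_num))
  refine (norm_laplace_gaussianPacket_sub_le (div_pos hb0 hX0) (4 * b) (by linarith)).trans ?_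
  rw [hcX]
  calc _ ≤ 2 * X * Real.exp (-X) + 1 :=
        add_le_add (mul_le_mul hsqrt hexp (Real.exp_nonneg _) (by positivity))
          (inv_le_one_of_one_le₀ (by linarith))
    _ ≤ 3 := by linarith

lemma norm_smul_wavePacket_le (hb : 0 ≤ b) (hX : 0 ≤ X) (a x : ℝ) :
    ‖a • wavePacket b X x‖ ≤ |a| := by
  rw [norm_smul, Real.norm_eq_abs]
  exact mul_le_of_le_one_right (abs_nonneg a) (norm_wavePacket_le_one hb hX x)

lemma norm_smul_deriv_wavePacket_le (hb : 1 ≤ b) (hX : 1 ≤ X) (a x : ℝ) :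
    ‖a • deriv (wavePacket b X) x‖ ≤ |a| * (5 * b) := by
  rw [norm_smul, Real.norm_eq_abs]
  gcongr
  exact norm_deriv_wavePacket_le hb hX x

end WavePacket

section PacketSeries

variable {a b X : ℕ → ℝ}

/-- The superposition of the wave packets with amplitudes `a n`, frequencies `4 * b n` and
centres `X n`. -/
noncomputable def packetSeries (a b X : ℕ → ℝ) (x : ℝ) : ℂ :=
  ∑' n, a n • wavePacket (b n) (X n) x

lemma summable_abs_of_summable_abs_mul (ha : Summable fun n ↦ |a n| * b n)
    (hb : ∀ n, 1 ≤ b n) : Summable fun n ↦ |a n| :=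
  ha.of_nonneg_of_le (fun n ↦ abs_nonneg (a n))
    fun n ↦ le_mul_of_one_le_right (abs_nonneg (a n)) (hb n)

lemma summable_abs_mul_five_mul (ha : Summable fun n ↦ |a n| * b n) :
    Summable fun n ↦ |a n| * (5 * b n) := by
  simpa only [mul_left_comm] using ha.mul_left 5

lemma hasDerivAt_packetSeries (ha : Summable fun n ↦ |a n| * b n) (hb : ∀ n, 1 ≤ b n)
    (hX : ∀ n, 1 ≤ X n) (x : ℝ) :
    HasDerivAt (packetSeries a b X) (∑' n, a n • deriv (wavePacket (b n) (X n)) x) x :=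
  hasDerivAt_tsum (summable_abs_mul_five_mul ha)
    (fun n y ↦ (differentiable_wavePacket (b n) (X n) y).hasDerivAt.const_smul (a n))
    (fun n ↦ norm_smul_deriv_wavePacket_le (hb n) (hX n) (a n))
    (.of_norm_bounded (summable_abs_of_summable_abs_mul ha hb) fun n ↦
      norm_smul_wavePacket_le (zero_le_one.trans (hb n)) (zero_le_one.trans (hX n)) (a n) 0) x

lemma deriv_packetSeries (ha : Summable fun n ↦ |a n| * b n) (hb : ∀ n, 1 ≤ b n)
    (hX : ∀ n, 1 ≤ X n) :
    deriv (packetSeries a b X) = fun x ↦ ∑' n, a n • deriv (wavePacket (b n) (X n)) x :=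
  funext fun x ↦ (hasDerivAt_packetSeries ha hb hX x).deriv

lemma continuous_deriv_packetSeries (ha : Summable fun n ↦ |a n| * b n) (hb : ∀ n, 1 ≤ b n)
    (hX : ∀ n, 1 ≤ X n) : Continuous (deriv (packetSeries a b X)) := by
  rw [deriv_packetSeries ha hb hX]
  exact continuous_tsum (fun n ↦ (continuous_deriv_wavePacket _ _).const_smul (a n))
    (summable_abs_mul_five_mul ha) fun n ↦ norm_smul_deriv_wavePacket_le (hb n) (hX n) (a n)

lemma tendsto_deriv_packetSeries (ha : Summable fun n ↦ |a n| * b n) (hb : ∀ n, 1 ≤ b n)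
    (hX : ∀ n, 1 ≤ X n) : Tendsto (deriv (packetSeries a b X)) atTop (𝓝 0) := by
  have hterm (n : ℕ) :
      Tendsto (fun x ↦ a n • deriv (wavePacket (b n) (X n)) x) atTop (𝓝 0) := by
    simpa only [smul_zero] using (tendsto_deriv_wavePacket (zero_lt_one.trans_le (hb n))
      (zero_lt_one.trans_le (hX n))).const_smul (a n)
  rw [deriv_packetSeries ha hb hX]
  simpa only [tsum_zero] using tendsto_tsum_of_dominated_convergence
    (summable_abs_mul_five_mul ha) hterm
    (Eventually.of_forall fun x n ↦ norm_smul_deriv_wavePacket_le (hb n) (hX n) (a n) x)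

lemma exists_entire_eq_laplace_packetSeries (ha : Summable fun n ↦ |a n|)
    (hb : ∀ n, 1 ≤ b n) (hbtop : Tendsto b atTop atTop) (hX : ∀ n, 1 ≤ X n) :
    ∃ F : ℂ → ℂ, Differentiable ℂ F ∧
      ∀ s : ℂ, 0 < s.re → F s = Laplace (packetSeries a b X) s := by
  have hb0 (n : ℕ) : 0 < b n := zero_lt_one.trans_le (hb n)
  have hX0 (n : ℕ) : 0 < X n := zero_lt_one.trans_le (hX n)
  refine ⟨fun s ↦ ∑' n, a n • Laplace (wavePacket (b n) (X n)) s,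
    differentiable_tsum_of_eventually_norm_le (ha.mul_right 3)
      (fun n ↦ (differentiable_laplace_wavePacket (hb0 n) (hX0 n)).const_smul (a n))
      fun R ↦ ?_, fun s hs ↦ ?_⟩
  · rw [Nat.cofinite_eq_atTop]
    filter_upwards [hbtop.eventually_ge_atTop R] with n hn s hs
    rw [norm_smul, Real.norm_eq_abs]
    gcongr
    exact norm_laplace_wavePacket_le (hb n) (hX n) (hs.trans hn)
  · have hsum := hasSum_laplace hs ha
      (fun n ↦ ((continuous_wavePacket _ _).const_smul (a n)).aestronglyMeasurable)
      (fun n x _ ↦ norm_smul_wavePacket_le (hb0 n).le (hX0 n).le (a n) x)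
    simp only [laplace_const_smul] at hsum
    exact hsum.tsum_eq

lemma geometric_gap_le_norm_packetSeries {r : ℝ} {n : ℕ} (hr0 : 0 ≤ r) (hr1 : r < 1)
    (hb : ∀ m, 1 ≤ b m) (hX : ∀ m, 0 < X m) (hdouble : ∀ m < n, 2 * X m ≤ X n)
    (hfar : Real.exp (-(X n / 2)) ≤ r ^ (n + 1)) :
    r ^ n - 2 * (r ^ (n + 1) / (1 - r)) ≤ ‖packetSeries (r ^ ·) b X (X n)‖ := by
  refine geometric_gap_le_norm_tsum hr0 hr1 (fun m ↦ ?_) ?_ fun m hm ↦ ?_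
  · exact (norm_smul_wavePacket_le (zero_le_one.trans (hb m)) (hX m).le _ _).trans_eq
      (abs_of_nonneg (pow_nonneg hr0 m))
  · simp [norm_wavePacket, abs_of_nonneg hr0]
  · rw [norm_smul, norm_pow, Real.norm_of_nonneg hr0]
    gcongr
    exact (norm_wavePacket_le_exp (hb m) (hX m) (hdouble m hm)).trans hfar

end PacketSeries

section Centres

lemma exists_doubling_seq {p : ℕ → ℝ → Prop} (hp : ∀ n, ∀ᶠ x in atTop, p n x) :
    ∃ X : ℕ → ℝ, (∀ m n, m < n → 2 * X m ≤ X n) ∧ ∀ n, p n (X n) := by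
  obtain ⟨φ, hφ, hpφ⟩ := extraction_forall_of_eventually fun n ↦
    (tendsto_pow_atTop_atTop_of_one_lt (one_lt_two (α := ℝ))).eventually (hp n)
  refine ⟨fun n ↦ 2 ^ φ n, fun m n hmn ↦ ?_, hpφ⟩
  rw [← pow_succ']
  exact pow_le_pow_right₀ one_le_two (hφ hmn)

lemma exists_sparse_centres {ρ : ℝ → ℝ} (hρ : Tendsto ρ atTop (𝓝 0)) {ε δ : ℕ → ℝ}
    (hε : ∀ n, 0 < ε n) (hδ : ∀ n, 0 < δ n) :
    ∃ X : ℕ → ℝ, (∀ m n, m < n → 2 * X m ≤ X n) ∧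
      ∀ n : ℕ, (n + 1 : ℝ) ≤ X n ∧ Real.exp (-(X n / 2)) < ε n ∧ ρ (X n) < δ n := by
  have hexp : Tendsto (fun x : ℝ ↦ Real.exp (-(x / 2))) atTop (𝓝 0) :=
    Real.tendsto_exp_neg_atTop_nhds_zero.comp (tendsto_id.atTop_div_const two_pos)
  exact exists_doubling_seq fun n ↦ (eventually_ge_atTop _).and
    ((hexp.eventually_lt_const (hε n)).and (hρ.eventually_lt_const (hδ n)))

lemma frequently_lt_norm_div_of_seq {E : Type*} [Norm E] {τ : ℝ → E} {ρ : ℝ → ℝ} {b X : ℕ → ℝ}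
    (hX : Tendsto X atTop atTop) (hb : Tendsto b atTop atTop) (hρ : ∀ n, 0 < ρ (X n))
    (hτ : ∀ n, b n * ρ (X n) ≤ ‖τ (X n)‖) (C : ℝ) : ∃ᶠ x in atTop, C < ‖τ x‖ / ρ x := by
  refine hX.frequently (Eventually.frequently ?_)
  filter_upwards [hb.eventually_gt_atTop C] with n hn
  exact hn.trans_le ((le_div_iff₀ (hρ n)).2 (hτ n))

end Centres

/-- Absence of remainders in the Ingham–Karamata theorem: for any positive `ρ`
tending to `0`, there is `τ ∈ C¹[0,∞)` with `τ'(x) → 0`, whose Laplace transform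
extends to an entire function, but with `limsup_{x→∞} |τ(x)|/ρ(x) = ∞`. -/
theorem no_remainder_ingham_karamata
    (ρ : ℝ → ℝ) (hρpos : ∀ x : ℝ, 0 ≤ x → 0 < ρ x)
    (hρ0 : Tendsto ρ atTop (nhds 0)) :
    ∃ τ τ' : ℝ → ℂ,
      (∀ x ∈ Set.Ici (0 : ℝ), HasDerivWithinAt τ (τ' x) (Set.Ici 0) x) ∧
      ContinuousOn τ' (Set.Ici 0) ∧
      Tendsto τ' atTop (nhds 0) ∧
      (∃ F : ℂ → ℂ, Differentiable ℂ F ∧ ∀ s : ℂ, 0 < s.re → F s = Laplace τ s) ∧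
      (∀ C : ℝ, ∃ᶠ x in atTop, C < ‖τ x‖ / ρ x) := by
  obtain ⟨X, hdouble, hX⟩ := exists_sparse_centres hρ0
    (ε := fun n ↦ (1 / 4) ^ (n + 1)) (δ := fun n ↦ (1 / 4) ^ n / 3 / (n + 1))
    (fun n ↦ by positivity) (fun n ↦ by positivity)
  set b : ℕ → ℝ := fun n ↦ n + 1
  have hb (n : ℕ) : 1 ≤ b n := le_add_of_nonneg_left n.cast_nonneg
  have hbtop : Tendsto b atTop atTop :=
    tendsto_atTop_add_const_right _ _ tendsto_natCast_atTop_atTop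
  have hX1 (n : ℕ) : 1 ≤ X n := (hb n).trans (hX n).1
  have hsum : Summable fun n ↦ |(1 / 4 : ℝ) ^ n| * b n :=
    summable_abs_pow_mul_add_one (by norm_num [abs_of_pos])
  have hlow (n : ℕ) : b n * ρ (X n) ≤ ‖packetSeries ((1 / 4) ^ ·) b X (X n)‖ := calc
    b n * ρ (X n) ≤ (1 / 4) ^ n / 3 := ((lt_div_iff₀' (by positivity)).1 (hX n).2.2).le
    _ = (1 / 4) ^ n - 2 * ((1 / 4) ^ (n + 1) / (1 - 1 / 4)) := by ring
    _ ≤ _ := geometric_gap_le_norm_packetSeries (by norm_num) (by norm_num) hb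
      (fun m ↦ zero_lt_one.trans_le (hX1 m)) (fun m ↦ hdouble m n) (hX n).2.1.le
  exact ⟨packetSeries ((1 / 4) ^ ·) b X, deriv (packetSeries ((1 / 4) ^ ·) b X),
    fun x _ ↦ (hasDerivAt_packetSeries hsum hb hX1 x).differentiableAt.hasDerivAt.hasDerivWithinAt,
    (continuous_deriv_packetSeries hsum hb hX1).continuousOn,
    tendsto_deriv_packetSeries hsum hb hX1,
    exists_entire_eq_laplace_packetSeries (summable_abs_of_summable_abs_mul hsum hb) hb hbtop hX1,
    frequently_lt_norm_div_of_seq (tendsto_atTop_mono (fun n ↦ (hX n).1) hbtop) hbtop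
      (fun n ↦ hρpos _ (zero_le_one.trans (hX1 n))) hlow⟩
end
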